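/- With the Lévy–Khintchine data (μ, c, K), κ as defined, and Λ(λ) := κ(λ,1)/(κ(λ,2) − 2κ(λ,1)), the function λ ↦ Λ(λ) is twice continuously differentiable on [0,1], and with m := (μ + ½σ²)/σ², s₃ := (∫x³K(dx))/σ³ and s₄ := (∫x⁴K(dx))/σ⁴ one has: Λ(0) = m, Λ'(0) = s₃·σ·(1/6 − m), and Λ''(0) = s₃²·σ²·(2m − 1/3) + (1/6)·s₄·σ²·(1/2 − 7m). -/

import Mathlib

open MeasureTheory Complex Set

/-- Cumulant generating function `κ(λ, z)` of the interpolating family. -/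
noncomputable def kappa (μ c : ℝ) (K : Measure ℝ) (lam : ℝ) (z : ℂ) : ℂ :=
  if lam = 0 then (μ : ℂ) * z + (((c + ∫ x : ℝ, x ^ 2 ∂K) : ℝ) : ℂ) / 2 * z ^ 2
  else (μ : ℂ) * z + (c : ℂ) / 2 * z ^ 2 +
    ((lam : ℂ) ^ 2)⁻¹ *
      ∫ x : ℝ, (Complex.exp ((lam : ℂ) * z * (x : ℂ)) - 1 - (lam : ℂ) * z * (x : ℂ)) ∂K

noncomputable def kbar (μ c : ℝ) (K : Measure ℝ) (lam : ℝ) (y z : ℂ) : ℂ :=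
  kappa μ c K lam (y + z) - kappa μ c K lam y - kappa μ c K lam z

noncomputable def gamLK (μ c : ℝ) (K : Measure ℝ) (lam : ℝ) (z : ℂ) : ℂ :=
  kbar μ c K lam z 1 / kbar μ c K lam 1 1

noncomputable def etaLK (μ c : ℝ) (K : Measure ℝ) (lam : ℝ) (z : ℂ) : ℂ :=
  kappa μ c K lam z - kappa μ c K lam 1 * gamLK μ c K lam z

/-- The mean-variance ratio `Λ(λ) = κ(λ,1) / (κ(λ,2) − 2κ(λ,1))`. -/
noncomputable def LamMV (μ c : ℝ) (K : Measure ℝ) (lam : ℝ) : ℂ :=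
  kappa μ c K lam 1 / (kappa μ c K lam 2 - 2 * kappa μ c K lam 1)


open scoped Topology

/-- The kernel functions `Φ_k(u) = ∫₀¹ (1-t) t^k e^{tu} dt`. -/
noncomputable def PhiK (k : ℕ) (u : ℝ) : ℝ :=
  ∫ t in (0:ℝ)..1, (1 - t) * t ^ k * Real.exp (t * u)

lemma PhiK_hasDerivAt (k : ℕ) (u : ℝ) : HasDerivAt (PhiK k) (PhiK (k + 1) u) u := by
  have h := intervalIntegral.hasDerivAt_integral_of_dominated_loc_of_deriv_le
    (μ := volume) (a := (0:ℝ)) (b := 1)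
    (F := fun u t : ℝ => (1 - t) * t ^ k * Real.exp (t * u))
    (F' := fun u t : ℝ => (1 - t) * t ^ (k + 1) * Real.exp (t * u))
    (x₀ := u) (s := Metric.ball u 1) (bound := fun _ => Real.exp (|u| + 1))
    (Metric.ball_mem_nhds u one_pos)
    (Filter.Eventually.of_forall fun x => (by fun_prop : Continuous _).aestronglyMeasurable)
    ((by fun_prop : Continuous _).intervalIntegrable _ _)
    ((by fun_prop : Continuous _).aestronglyMeasurable)
    (Filter.Eventually.of_forall fun t ht x hx => ?_)
    (continuous_const.intervalIntegrable _ _)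
    (Filter.Eventually.of_forall fun t ht x hx => ?_)
  · exact h.2
  · rw [uIoc_of_le zero_le_one] at ht
    have h1 : |x - u| < 1 := by simpa [Real.dist_eq] using hx
    have h2 : |x| ≤ |u| + 1 := by
      have := abs_add_le u (x - u)
      rw [add_sub_cancel] at this
      linarith
    have h3 : t * x ≤ |u| + 1 := by
      have : t * x ≤ 1 * |x| :=
        (mul_le_mul_of_nonneg_left (le_abs_self x) ht.1.le).trans
          (mul_le_mul_of_nonneg_right ht.2 (abs_nonneg x))
      linarith
    have h4 : 0 ≤ 1 - t := by linarith [ht.2]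
    have h5 : t ^ (k + 1) ≤ 1 := pow_le_one₀ ht.1.le ht.2
    have h6 : 0 ≤ t ^ (k + 1) := pow_nonneg ht.1.le _
    have h7 : (1 - t) * t ^ (k + 1) ≤ 1 := mul_le_one₀ (by linarith [ht.1]) h6 h5
    rw [Real.norm_eq_abs, abs_of_nonneg (mul_nonneg (mul_nonneg h4 h6) (Real.exp_pos _).le)]
    calc _ ≤ 1 * Real.exp (t * x) := mul_le_mul_of_nonneg_right h7 (Real.exp_pos _).le
      _ ≤ _ := by rw [one_mul]; exact Real.exp_le_exp.2 h3
  · have h1 : HasDerivAt (fun x : ℝ => t * x) t x := by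
      simpa using (hasDerivAt_id x).const_mul t
    have := (h1.exp).const_mul ((1 - t) * t ^ k)
    exact this.congr_deriv (by ring)

lemma PhiK_continuous (k : ℕ) : Continuous (PhiK k) :=
  continuous_iff_continuousAt.2 fun u => (PhiK_hasDerivAt k u).continuousAt

lemma PhiK_abs_le (k : ℕ) (u : ℝ) : |PhiK k u| ≤ 1 + Real.exp u := by
  have h := intervalIntegral.norm_integral_le_of_norm_le_const
    (a := (0:ℝ)) (b := 1) (C := 1 + Real.exp u)
    (f := fun t : ℝ => (1 - t) * t ^ k * Real.exp (t * u)) ?_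
  · simpa [PhiK] using h
  · intro t ht
    rw [uIoc_of_le zero_le_one] at ht
    have h4 : 0 ≤ 1 - t := by linarith [ht.2]
    have h5 : t ^ k ≤ 1 := pow_le_one₀ ht.1.le ht.2
    have h6 : 0 ≤ t ^ k := pow_nonneg ht.1.le _
    have h7 : (1 - t) * t ^ k ≤ 1 := mul_le_one₀ (by linarith [ht.1]) h6 h5
    rw [Real.norm_eq_abs, abs_of_nonneg (mul_nonneg (mul_nonneg h4 h6) (Real.exp_pos _).le)]
    calc _ ≤ 1 * Real.exp (t * u) := mul_le_mul_of_nonneg_right h7 (Real.exp_pos _).le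
      _ ≤ 1 + Real.exp u := by
        rw [one_mul]
        rcases le_total 0 u with hu | hu
        · have : Real.exp (t * u) ≤ Real.exp u :=
            Real.exp_le_exp.2 (mul_le_of_le_one_left hu ht.2)
          linarith
        · have : Real.exp (t * u) ≤ 1 :=
            Real.exp_le_one_iff.2 (mul_nonpos_of_nonneg_of_nonpos ht.1.le hu)
          linarith [Real.exp_pos u]

lemma PhiK_zero_eq (u : ℝ) : u ^ 2 * PhiK 0 u = Real.exp u - 1 - u := by
  have h := intervalIntegral.integral_eq_sub_of_hasDerivAt (a := (0:ℝ)) (b := 1)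
    (f := fun t : ℝ => (u * (1 - t) + 1) * Real.exp (t * u))
    (f' := fun t : ℝ => u ^ 2 * ((1 - t) * t ^ 0 * Real.exp (t * u))) ?_
    ((by fun_prop : Continuous _).intervalIntegrable _ _)
  · rw [intervalIntegral.integral_const_mul] at h
    rw [PhiK, h]
    simp
    ring
  · intro t _
    have h1 : HasDerivAt (fun t : ℝ => t * u) u t := by
      simpa using (hasDerivAt_id t).mul_const u
    have h2 : HasDerivAt (fun t : ℝ => u * (1 - t) + 1) (-u) t := by
      simpa using (((hasDerivAt_id t).const_sub 1).const_mul u).add_const 1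
    have := h2.mul h1.exp
    exact this.congr_deriv (by ring)

lemma PhiK_at_zero (k : ℕ) : PhiK k 0 = 1 / ((k + 1) * (k + 2)) := by
  have : PhiK k 0 = ∫ t in (0:ℝ)..1, (t ^ k - t ^ (k + 1)) := by
    unfold PhiK
    congr 1
    ext t
    simp
    ring
  rw [this, intervalIntegral.integral_sub (by simp) (by simp), integral_pow, integral_pow]
  have h1 : (k : ℝ) + 1 ≠ 0 := by positivity
  have h2 : (k : ℝ) + 2 ≠ 0 := by positivity
  have h3 : (k : ℝ) + 1 + 1 ≠ 0 := by positivity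
  simp
  field_simp
  ring

lemma w_pos (u : ℝ) : 0 < 4 * PhiK 0 (2 * u) - 2 * PhiK 0 u := by
  by_cases hu : u = 0
  · subst hu
    rw [mul_zero, PhiK_at_zero]
    norm_num
  · have h1 := PhiK_zero_eq u
    have h2 := PhiK_zero_eq (2 * u)
    have h3 : Real.exp (2 * u) = Real.exp u ^ 2 := by
      rw [← Real.exp_nat_mul]; norm_num
    have h4 : u ^ 2 * (4 * PhiK 0 (2 * u) - 2 * PhiK 0 u) = (Real.exp u - 1) ^ 2 := by
      rw [h3] at h2
      linear_combination h2 - 2 * h1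
    have h5 : Real.exp u - 1 ≠ 0 := by
      intro h
      exact hu (Real.exp_eq_one_iff u |>.1 (by linarith))
    have h6 : 0 < u ^ 2 := by positivity
    have h7 : 0 < (Real.exp u - 1) ^ 2 := by positivity
    rw [← h4] at h7
    exact (pos_iff_pos_of_mul_pos h7).1 h6

/-- `g_k(s) = ∫ x^{k+2} Φ_k(s x) K(dx)`. -/
noncomputable def gK (K : Measure ℝ) (k : ℕ) (s : ℝ) : ℝ :=
  ∫ x : ℝ, x ^ (k + 2) * PhiK k (s * x) ∂K

lemma int_pow_exp (K : Measure ℝ)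
    (hKmin : ∫⁻ x : ℝ, ENNReal.ofReal (min 1 (x ^ 2)) ∂K ≠ ⊤) (a b : ℝ)
    (hKexp : ∀ s ∈ Set.Ioo a b,
      ∫⁻ x in {x : ℝ | 1 ≤ |x|}, ENNReal.ofReal (Real.exp (s * x)) ∂K ≠ ⊤)
    (n : ℕ) (s : ℝ) (hs : s ∈ Set.Ioo a b) :
    Integrable (fun x : ℝ => |x| ^ (n + 2) * Real.exp (s * x)) K := by
  have hm : MeasurableSet {x : ℝ | 1 ≤ |x|} := measurableSet_le measurable_const (by fun_prop)
  have h1 : IntegrableOn (fun x : ℝ => |x| ^ (n + 2) * Real.exp (s * x)) {x : ℝ | 1 ≤ |x|} K := by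
    have hsub : Set.Ioo a b ⊆
        ProbabilityTheory.integrableExpSet (fun x : ℝ => x) (K.restrict {x : ℝ | 1 ≤ |x|}) := by
      intro r hr
      refine ⟨(by fun_prop : Continuous _).aestronglyMeasurable, ?_⟩
      rw [hasFiniteIntegral_iff_ofReal (Filter.Eventually.of_forall fun x => (Real.exp_pos _).le)]
      exact (hKexp r hr).lt_top
    exact ProbabilityTheory.integrable_pow_abs_mul_exp_of_mem_interior_integrableExpSet
      (X := fun x : ℝ => x) (interior_maximal hsub isOpen_Ioo hs) (n + 2)
  have hmin : Integrable (fun x : ℝ => min 1 (x ^ 2)) K := by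
    refine ⟨(by fun_prop : Continuous _).aestronglyMeasurable, ?_⟩
    rw [hasFiniteIntegral_iff_ofReal (Filter.Eventually.of_forall fun x => by positivity)]
    exact hKmin.lt_top
  have h2 : IntegrableOn (fun x : ℝ => |x| ^ (n + 2) * Real.exp (s * x)) {x : ℝ | 1 ≤ |x|}ᶜ K := by
    refine Integrable.mono' ((hmin.mul_const (Real.exp |s|)).integrableOn)
      (by fun_prop : Continuous _).aestronglyMeasurable ?_
    refine (ae_restrict_iff' hm.compl).2 (Filter.Eventually.of_forall fun x hx => ?_)
    have hx' : |x| < 1 := by simpa using hx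
    rw [Real.norm_eq_abs, abs_of_nonneg (by positivity)]
    have e1 : min 1 (x ^ 2) = |x| ^ 2 := by
      rw [sq_abs]
      refine min_eq_right ?_
      rw [← sq_abs]
      exact pow_le_one₀ (abs_nonneg x) hx'.le
    rw [e1]
    refine mul_le_mul (pow_le_pow_of_le_one (abs_nonneg x) hx'.le (by omega))
      (Real.exp_le_exp.2 ?_) (Real.exp_pos _).le (by positivity)
    calc s * x ≤ |s * x| := le_abs_self _
      _ = |s| * |x| := abs_mul _ _
      _ ≤ |s| := mul_le_of_le_one_right (abs_nonneg s) hx'.le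
  have := h1.union h2
  rwa [Set.union_compl_self, integrableOn_univ] at this

lemma gK_integrable (K : Measure ℝ)
    (hKmin : ∫⁻ x : ℝ, ENNReal.ofReal (min 1 (x ^ 2)) ∂K ≠ ⊤) (a b : ℝ)
    (h0 : (0 : ℝ) ∈ Set.Ioo a b)
    (hKexp : ∀ s ∈ Set.Ioo a b,
      ∫⁻ x in {x : ℝ | 1 ≤ |x|}, ENNReal.ofReal (Real.exp (s * x)) ∂K ≠ ⊤)
    (k : ℕ) (s : ℝ) (hs : s ∈ Set.Ioo a b) :
    Integrable (fun x : ℝ => x ^ (k + 2) * PhiK k (s * x)) K := by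
  have hp := PhiK_continuous k
  refine Integrable.mono' ((int_pow_exp K hKmin a b hKexp k 0 h0).add
    (int_pow_exp K hKmin a b hKexp k s hs)) (by fun_prop : Continuous _).aestronglyMeasurable
    (Filter.Eventually.of_forall fun x => ?_)
  simp only [Pi.add_apply, zero_mul, Real.exp_zero]
  rw [Real.norm_eq_abs, abs_mul, abs_pow, ← mul_add]
  exact mul_le_mul_of_nonneg_left (PhiK_abs_le k _) (by positivity)

lemma gK_hasDerivAt (K : Measure ℝ)
    (hKmin : ∫⁻ x : ℝ, ENNReal.ofReal (min 1 (x ^ 2)) ∂K ≠ ⊤) (a b : ℝ)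
    (h0 : (0 : ℝ) ∈ Set.Ioo a b)
    (hKexp : ∀ s ∈ Set.Ioo a b,
      ∫⁻ x in {x : ℝ | 1 ≤ |x|}, ENNReal.ofReal (Real.exp (s * x)) ∂K ≠ ⊤)
    (k : ℕ) (s : ℝ) (hs : s ∈ Set.Ioo a b) :
    HasDerivAt (gK K k) (gK K (k + 1) s) s := by
  obtain ⟨p, hap, hps⟩ := exists_between hs.1
  obtain ⟨q, hsq, hqb⟩ := exists_between hs.2
  have hp : p ∈ Set.Ioo a b := ⟨hap, hps.trans hs.2⟩
  have hq : q ∈ Set.Ioo a b := ⟨hs.1.trans hsq, hqb⟩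
  have hc := PhiK_continuous k
  have hc1 := PhiK_continuous (k + 1)
  have h := hasDerivAt_integral_of_dominated_loc_of_deriv_le (μ := K)
    (F := fun s x : ℝ => x ^ (k + 2) * PhiK k (s * x))
    (F' := fun s x : ℝ => x ^ (k + 1 + 2) * PhiK (k + 1) (s * x))
    (x₀ := s) (s := Set.Ioo p q)
    (bound := fun x => |x| ^ (k + 1 + 2) * Real.exp (0 * x) +
      (|x| ^ (k + 1 + 2) * Real.exp (p * x) + |x| ^ (k + 1 + 2) * Real.exp (q * x)))
    (Ioo_mem_nhds hps hsq)
    (Filter.Eventually.of_forall fun x => (by fun_prop : Continuous _).aestronglyMeasurable)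
    (gK_integrable K hKmin a b h0 hKexp k s hs)
    ((by fun_prop : Continuous _).aestronglyMeasurable)
    (Filter.Eventually.of_forall fun x r hr => ?_)
    ((int_pow_exp K hKmin a b hKexp _ 0 h0).add
      ((int_pow_exp K hKmin a b hKexp _ p hp).add (int_pow_exp K hKmin a b hKexp _ q hq)))
    (Filter.Eventually.of_forall fun x r hr => ?_)
  · exact h.2
  · rw [Real.norm_eq_abs, abs_mul, abs_pow, ← mul_add, ← mul_add]
    refine mul_le_mul_of_nonneg_left ((PhiK_abs_le _ _).trans ?_) (by positivity)
    rw [zero_mul, Real.exp_zero]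
    have e1 := Real.exp_pos (p * x)
    have e2 := Real.exp_pos (q * x)
    rcases le_total 0 x with hx | hx
    · have : Real.exp (r * x) ≤ Real.exp (q * x) :=
        Real.exp_le_exp.2 (mul_le_mul_of_nonneg_right hr.2.le hx)
      linarith
    · have : Real.exp (r * x) ≤ Real.exp (p * x) :=
        Real.exp_le_exp.2 (mul_le_mul_of_nonpos_right hr.1.le hx)
      linarith
  · have h1 : HasDerivAt (fun r : ℝ => r * x) x r := by
      simpa using (hasDerivAt_id r).mul_const x
    have := ((PhiK_hasDerivAt k (r * x)).comp r h1).const_mul (x ^ (k + 2))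
    exact this.congr_deriv (by ring)

lemma gK_zero (K : Measure ℝ) (k : ℕ) :
    gK K k 0 = (∫ x : ℝ, x ^ (k + 2) ∂K) / ((k + 1) * (k + 2)) := by
  unfold gK
  simp only [zero_mul, PhiK_at_zero]
  rw [integral_mul_const]
  ring

lemma kappa_eq (μ c : ℝ) (K : Measure ℝ) (lam z : ℝ) :
    kappa μ c K lam (z : ℂ) = ((μ * z + c / 2 * z ^ 2 + z ^ 2 * gK K 0 (lam * z) : ℝ) : ℂ) := by
  unfold kappa
  split_ifs with h
  · subst h
    rw [zero_mul, gK_zero]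
    push_cast
    simp
    ring
  · have e : ∀ x : ℝ, Complex.exp ((lam : ℂ) * z * (x : ℂ)) - 1 - (lam : ℂ) * z * (x : ℂ) =
        (((lam * z) ^ 2 * (x ^ (0 + 2) * PhiK 0 (lam * z * x)) : ℝ) : ℂ) := by
      intro x
      have := PhiK_zero_eq (lam * z * x)
      have e2 : (lam * z) ^ 2 * (x ^ (0 + 2) * PhiK 0 (lam * z * x)) =
          Real.exp (lam * z * x) - 1 - lam * z * x := by
        rw [← this]; ring
      rw [e2]
      push_cast
      rfl
    simp_rw [e]
    rw [integral_complex_ofReal, integral_const_mul]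
    change _ + _ * (((lam * z) ^ 2 * gK K 0 (lam * z) : ℝ) : ℂ) = _
    have h' : (lam : ℂ) ≠ 0 := by exact_mod_cast h
    push_cast
    field_simp

lemma LamMV_eq (μ c : ℝ) (K : Measure ℝ) (lam : ℝ) :
    LamMV μ c K lam =
      (((μ + c / 2 + gK K 0 lam) / (c + 4 * gK K 0 (2 * lam) - 2 * gK K 0 lam) : ℝ) : ℂ) := by
  unfold LamMV
  have h1 := kappa_eq μ c K lam 1
  have h2 := kappa_eq μ c K lam 2
  rw [Complex.ofReal_one] at h1
  rw [show ((2 : ℝ) : ℂ) = 2 by norm_num] at h2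
  rw [h1, h2, mul_one, mul_comm lam 2, Complex.ofReal_div]
  congr 1
  · congr 1
    ring
  · push_cast
    ring

lemma den_pos (c : ℝ) (hc : 0 ≤ c) (K : Measure ℝ)
    (hKmin : ∫⁻ x : ℝ, ENNReal.ofReal (min 1 (x ^ 2)) ∂K ≠ ⊤) (a b : ℝ)
    (h0 : (0 : ℝ) ∈ Set.Ioo a b)
    (hKexp : ∀ s ∈ Set.Ioo a b,
      ∫⁻ x in {x : ℝ | 1 ≤ |x|}, ENNReal.ofReal (Real.exp (s * x)) ∂K ≠ ⊤)
    (hpos : 0 < c + ∫ x : ℝ, x ^ 2 ∂K)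
    (s : ℝ) (hs : s ∈ Set.Ioo a b) (hs2 : 2 * s ∈ Set.Ioo a b) :
    0 < c + 4 * gK K 0 (2 * s) - 2 * gK K 0 s := by
  have i1 := gK_integrable K hKmin a b h0 hKexp 0 s hs
  have i2 := gK_integrable K hKmin a b h0 hKexp 0 (2 * s) hs2
  have i3 : Integrable (fun x : ℝ => 4 * (x ^ (0 + 2) * PhiK 0 (2 * s * x)) -
      2 * (x ^ (0 + 2) * PhiK 0 (s * x))) K := (i2.const_mul 4).sub (i1.const_mul 2)
  have e : 4 * gK K 0 (2 * s) - 2 * gK K 0 s = ∫ x : ℝ, (4 * (x ^ (0 + 2) * PhiK 0 (2 * s * x)) -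
      2 * (x ^ (0 + 2) * PhiK 0 (s * x))) ∂K := by
    rw [integral_sub (i2.const_mul 4) (i1.const_mul 2), integral_const_mul, integral_const_mul]
    rfl
  have e2 : ∀ x : ℝ, 4 * (x ^ (0 + 2) * PhiK 0 (2 * s * x)) - 2 * (x ^ (0 + 2) * PhiK 0 (s * x)) =
      x ^ 2 * (4 * PhiK 0 (2 * (s * x)) - 2 * PhiK 0 (s * x)) := by
    intro x; rw [mul_assoc 2 s x]; ring
  simp_rw [e2] at e i3
  have nn : ∀ x : ℝ, 0 ≤ x ^ 2 * (4 * PhiK 0 (2 * (s * x)) - 2 * PhiK 0 (s * x)) := fun x =>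
    mul_nonneg (sq_nonneg x) (w_pos _).le
  have hnn : 0 ≤ ∫ x : ℝ, x ^ 2 * (4 * PhiK 0 (2 * (s * x)) - 2 * PhiK 0 (s * x)) ∂K :=
    integral_nonneg nn
  rw [add_sub_assoc, e]
  rcases hc.lt_or_eq with h | h
  · linarith
  · rcases hnn.lt_or_eq with h' | h'
    · linarith
    · exfalso
      have hz := (integral_eq_zero_iff_of_nonneg nn i3).1 h'.symm
      have : ∫ x : ℝ, x ^ 2 ∂K = 0 := by
        refine integral_eq_zero_of_ae ?_
        filter_upwards [hz] with x hx
        exact (mul_eq_zero.1 hx).resolve_right (w_pos _).ne'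
      linarith

/-- second-order expansion of the mean-variance ratio `Λ`
(Lemma `approxTau`). -/
theorem mean_variance_ratio_expansion
    (μ c : ℝ) (hc : 0 ≤ c) (K : MeasureTheory.Measure ℝ)
    (hK0 : K {0} = 0)
    (hKmin : ∫⁻ x : ℝ, ENNReal.ofReal (min 1 (x ^ 2)) ∂K ≠ ⊤)
    (R : ℝ) (hR : R ≠ 0) (a b : ℝ)
    (h0 : (0 : ℝ) ∈ Set.Ioo a b) (h2 : (2 : ℝ) ∈ Set.Ioo a b)
    (h2R : 2 * R ∈ Set.Ioo a b)
    (hK5 : ∫⁻ x in {x : ℝ | 1 ≤ |x|}, ENNReal.ofReal (|x| ^ 5) ∂K ≠ ⊤)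
    (hKexp : ∀ s ∈ Set.Ioo a b,
      ∫⁻ x in {x : ℝ | 1 ≤ |x|}, ENNReal.ofReal (Real.exp (s * x)) ∂K ≠ ⊤)
    (σ2 : ℝ) (hσ2 : σ2 = c + ∫ x : ℝ, x ^ 2 ∂K) (hσ2pos : 0 < σ2)
    (σ m s3 s4 : ℝ) (hσ : σ = Real.sqrt σ2) (hm : m = (μ + σ2 / 2) / σ2)
    (hs3 : s3 = (∫ x : ℝ, x ^ 3 ∂K) / σ ^ 3) (hs4 : s4 = (∫ x : ℝ, x ^ 4 ∂K) / σ ^ 4)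
    :
    ContDiffOn ℝ 2 (LamMV μ c K) (Set.Icc 0 1) ∧
    LamMV μ c K 0 = (m : ℂ) ∧
    iteratedDerivWithin 1 (LamMV μ c K) (Set.Icc 0 1) 0 =
      (s3 : ℂ) * (σ : ℂ) * (1 / 6 - (m : ℂ)) ∧
    iteratedDerivWithin 2 (LamMV μ c K) (Set.Icc 0 1) 0 =
      (s3 : ℂ) ^ 2 * (σ : ℂ) ^ 2 * (2 * (m : ℂ) - 1 / 3) +
        (1 / 6 : ℂ) * (s4 : ℂ) * (σ : ℂ) ^ 2 * (1 / 2 - 7 * (m : ℂ)) := by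
  have hD : ∀ k s, s ∈ Set.Ioo a b → HasDerivAt (gK K k) (gK K (k + 1) s) s :=
    fun k s hs => gK_hasDerivAt K hKmin a b h0 hKexp k s hs
  have hcd : ∀ n : ℕ, ∀ k, ContDiffOn ℝ n (gK K k) (Set.Ioo a b) := by
    intro n
    induction n with
    | zero =>
      intro k
      rw [Nat.cast_zero, contDiffOn_zero]
      exact fun s hs => (hD k s hs).continuousAt.continuousWithinAt
    | succ n ih =>
      intro k
      rw [Nat.cast_succ, contDiffOn_succ_iff_deriv_of_isOpen isOpen_Ioo]
      refine ⟨fun s hs => (hD k s hs).differentiableAt.differentiableWithinAt, by simp, ?_⟩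
      exact (ih (k + 1)).congr fun s hs => (hD k s hs).deriv
  have hcdA : ∀ s ∈ Set.Ioo a b, ContDiffAt ℝ 2 (gK K 0) s := fun s hs =>
    (hcd 2 0).contDiffAt (isOpen_Ioo.mem_nhds hs)
  have hposσ : 0 < c + ∫ x : ℝ, x ^ 2 ∂K := hσ2 ▸ hσ2pos
  have hfun : LamMV μ c K = fun lam => (((μ + c / 2 + gK K 0 lam) /
      (c + 4 * gK K 0 (2 * lam) - 2 * gK K 0 lam) : ℝ) : ℂ) := funext (LamMV_eq μ c K)
  have hden : ∀ s ∈ Set.Ioo a b, 2 * s ∈ Set.Ioo a b →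
      0 < c + 4 * gK K 0 (2 * s) - 2 * gK K 0 s :=
    fun s hs hs2 => den_pos c hc K hKmin a b h0 hKexp hposσ s hs hs2
  have hmem : ∀ s ∈ Set.Icc (0:ℝ) 1, s ∈ Set.Ioo a b ∧ 2 * s ∈ Set.Ioo a b := by
    intro s hs
    refine ⟨⟨?_, ?_⟩, ⟨?_, ?_⟩⟩ <;> linarith [h0.1, h2.2, hs.1, hs.2]
  have hcont : ∀ s ∈ Set.Icc (0:ℝ) 1, ContDiffAt ℝ 2 (LamMV μ c K) s := by
    intro s hs
    obtain ⟨m1, m2⟩ := hmem s hs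
    rw [hfun]
    have c1 := hcdA s m1
    have c2 : ContDiffAt ℝ 2 (fun lam => gK K 0 (2 * lam)) s :=
      ContDiffAt.comp (g := gK K 0) (f := fun lam : ℝ => 2 * lam) s (hcdA (2 * s) m2) (contDiffAt_const.mul contDiffAt_id)
    have c3 : ContDiffAt ℝ 2 (fun lam => (μ + c / 2 + gK K 0 lam) /
        (c + 4 * gK K 0 (2 * lam) - 2 * gK K 0 lam)) s :=
      (contDiffAt_const.add c1).div
        ((contDiffAt_const.add (contDiffAt_const.mul c2)).sub (contDiffAt_const.mul c1))
        (hden s m1 m2).ne'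
    exact Complex.ofRealCLM.contDiff.contDiffAt.comp s c3
  have hzero : (0:ℝ) ∈ Set.Icc (0:ℝ) 1 := ⟨le_rfl, zero_le_one⟩
  have hud : UniqueDiffOn ℝ (Set.Icc (0:ℝ) 1) := uniqueDiffOn_Icc zero_lt_one
  -- numerator and denominator derivatives
  have hN : ∀ s ∈ Set.Ioo a b, ∀ k, HasDerivAt (fun lam => gK K k (lam)) (gK K (k + 1) s) s :=
    fun s hs k => hD k s hs
  have hN2 : ∀ s, 2 * s ∈ Set.Ioo a b → ∀ k,
      HasDerivAt (fun lam => gK K k (2 * lam)) (gK K (k + 1) (2 * s) * 2) s := by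
    intro s hs k
    have h1 : HasDerivAt (fun r : ℝ => 2 * r) 2 s := by
      simpa using (hasDerivAt_id s).const_mul 2
    exact (hD k (2 * s) hs).comp s h1
  have hDen : ∀ s ∈ Set.Ioo a b, 2 * s ∈ Set.Ioo a b →
      HasDerivAt (fun lam => c + 4 * gK K 0 (2 * lam) - 2 * gK K 0 lam)
        (4 * (gK K 1 (2 * s) * 2) - 2 * gK K 1 s) s := by
    intro s hs hs2
    exact (((hN2 s hs2 0).const_mul 4).const_add c).sub ((hN s hs 0).const_mul 2)
  have hNum : ∀ s ∈ Set.Ioo a b,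
      HasDerivAt (fun lam => μ + c / 2 + gK K 0 lam) (gK K 1 s) s :=
    fun s hs => (hN s hs 0).const_add _
  have hev : ∀ᶠ s in 𝓝 (0:ℝ), s ∈ Set.Ioo a b ∧ 2 * s ∈ Set.Ioo a b := by
    have t1 : ∀ᶠ s in 𝓝 (0:ℝ), s ∈ Set.Ioo a b := isOpen_Ioo.mem_nhds h0
    have t2 : ∀ᶠ s in 𝓝 (0:ℝ), 2 * s ∈ Set.Ioo a b :=
      (by fun_prop : Continuous fun s : ℝ => 2 * s).continuousAt.eventually_mem
        (isOpen_Ioo.mem_nhds (by simpa using h0))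
    exact t1.and t2
  have hL1 : ∀ s ∈ Set.Ioo a b, 2 * s ∈ Set.Ioo a b → HasDerivAt (LamMV μ c K)
      (((gK K 1 s * (c + 4 * gK K 0 (2 * s) - 2 * gK K 0 s) -
        (μ + c / 2 + gK K 0 s) * (4 * (gK K 1 (2 * s) * 2) - 2 * gK K 1 s)) /
        (c + 4 * gK K 0 (2 * s) - 2 * gK K 0 s) ^ 2 : ℝ) : ℂ) s := by
    intro s hs hs2
    rw [hfun]
    exact ((hNum s hs).div (hDen s hs hs2) (hden s hs hs2).ne').ofReal_comp
  have h00 : 2 * (0:ℝ) ∈ Set.Ioo a b := by simpa using h0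
  have hDen1 : HasDerivAt (fun s => 4 * (gK K 1 (2 * s) * 2) - 2 * gK K 1 s)
      (4 * (gK K 2 (2 * 0) * 2 * 2) - 2 * gK K 2 0) 0 :=
    (((hN2 0 h00 1).mul_const 2).const_mul 4).sub ((hN 0 h0 1).const_mul 2)
  have hL2 := ((((hN 0 h0 1).mul (hDen 0 h0 h00)).sub ((hNum 0 h0).mul hDen1)).div
    ((hDen 0 h0 h00).pow 2) (pow_ne_zero 2 (hden 0 h0 h00).ne')).ofReal_comp
  have hderiv : deriv (LamMV μ c K) =ᶠ[𝓝 0] fun s =>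
      (((gK K 1 s * (c + 4 * gK K 0 (2 * s) - 2 * gK K 0 s) -
        (μ + c / 2 + gK K 0 s) * (4 * (gK K 1 (2 * s) * 2) - 2 * gK K 1 s)) /
        (c + 4 * gK K 0 (2 * s) - 2 * gK K 0 s) ^ 2 : ℝ) : ℂ) := by
    filter_upwards [hev] with s hs
    exact (hL1 s hs.1 hs.2).deriv
  have g0 : gK K 0 0 = (σ2 - c) / 2 := by
    rw [gK_zero, hσ2]; norm_num
  have hσpos : 0 < σ := hσ ▸ Real.sqrt_pos.2 hσ2pos
  have hsq : σ2 = σ ^ 2 := by rw [hσ, Real.sq_sqrt hσ2pos.le]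
  have g1 : gK K 1 0 = s3 * σ ^ 3 / 6 := by
    rw [gK_zero, hs3, div_mul_cancel₀ _ (by positivity)]; norm_num
  have g2 : gK K 2 0 = s4 * σ ^ 4 / 12 := by
    rw [gK_zero, hs4, div_mul_cancel₀ _ (by positivity)]; norm_num
  have hμ : μ = m * σ ^ 2 - σ ^ 2 / 2 := by
    rw [hm, hsq, div_mul_cancel₀ _ (by positivity)]; ring
  have hd0 : c + 4 * gK K 0 0 - 2 * gK K 0 0 = σ ^ 2 := by
    rw [g0, hsq]; ring
  have hn0 : μ + c / 2 + gK K 0 0 = m * σ ^ 2 := by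
    rw [g0, hsq, hμ]; ring
  refine ⟨fun s hs => (hcont s hs).contDiffWithinAt, ?_, ?_, ?_⟩
  · rw [LamMV_eq, mul_zero, hd0, hn0]
    congr 1
    field_simp
  · rw [iteratedDerivWithin_eq_iteratedDeriv hud ((hcont 0 hzero).of_le (by norm_num)) hzero,
      iteratedDeriv_one, (hL1 0 h0 h00).deriv, mul_zero, hd0, hn0, g1]
    have : ((s3 : ℂ) * (σ : ℂ) * (1 / 6 - (m : ℂ))) = ((s3 * σ * (1 / 6 - m) : ℝ) : ℂ) := by
      push_cast; ring
    rw [this]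
    congr 1
    field_simp
    ring
  · rw [iteratedDerivWithin_eq_iteratedDeriv hud (hcont 0 hzero) hzero,
      iteratedDeriv_succ, iteratedDeriv_one, hderiv.deriv_eq]
    refine hL2.deriv.trans ?_
    simp only [mul_zero, Nat.reduceAdd, Pi.mul_apply, Pi.sub_apply, Pi.pow_apply]
    rw [hd0, hn0, g1, g2]
    have : (s3 : ℂ) ^ 2 * (σ : ℂ) ^ 2 * (2 * (m : ℂ) - 1 / 3) +
        (1 / 6 : ℂ) * (s4 : ℂ) * (σ : ℂ) ^ 2 * (1 / 2 - 7 * (m : ℂ)) =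
        ((s3 ^ 2 * σ ^ 2 * (2 * m - 1 / 3) + (1 / 6) * s4 * σ ^ 2 * (1 / 2 - 7 * m) : ℝ) : ℂ) := by
      push_cast; ring
    rw [this]
    congr 1
    field_simp
    ring
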